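/- arXiv:1209.1721 — 4 statements merged into one kernel-verified Lean document; each statement's English description precedes it below -/
import Mathlib

section
/- Let S be a semiring, A a strictly upper triangular n×n matrix over S (A i j = 0 whenever j ≤ i), and B an n×s matrix over S. Then the matrix Bellman equation X = A·X + B has the unique solution X = (I + A + A² + ⋯ + A^{n−1})·B; that is, any matrix X with X = A·X + B equals (∑_{k=0}^{n-1} A^k)·B. -/
/-- The entries of the `k`-th power of a strictly upper triangular matrix vanish below the
`k`-th superdiagonal. -/
theorem Matrix.pow_apply_eq_zero_of_strictly_upper {S : Type*} [Semiring S] {n : ℕ}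
    {A : Matrix (Fin n) (Fin n) S} (hA : ∀ i j : Fin n, j ≤ i → A i j = 0) (k : ℕ)
    (i j : Fin n) (hij : (j : ℕ) < i + k) : (A ^ k) i j = 0 := by
  induction k generalizing i with
  | zero => exact Matrix.one_apply_ne (by omega)
  | succ k ih =>
    rw [pow_succ', Matrix.mul_apply]
    refine Finset.sum_eq_zero fun l _ => ?_
    rcases le_or_gt l i with h | h
    · rw [hA i l h, zero_mul]
    · rw [ih l (by omega), mul_zero]

theorem Matrix.pow_eq_zero_of_strictly_upper {S : Type*} [Semiring S] {n : ℕ}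
    {A : Matrix (Fin n) (Fin n) S} (hA : ∀ i j : Fin n, j ≤ i → A i j = 0) : A ^ n = 0 := by
  ext i j
  exact Matrix.pow_apply_eq_zero_of_strictly_upper hA n i j (by omega)

/-- Iterating the Bellman equation `m` times. -/
theorem Matrix.eq_pow_mul_add_of_bellman {S : Type*} [Semiring S] {ι κ : Type*} [Fintype ι]
    [DecidableEq ι] {A : Matrix ι ι S} {B X : Matrix ι κ S} (hX : X = A * X + B) (m : ℕ) :
    X = A ^ m * X + (∑ k ∈ Finset.range m, A ^ k) * B := by
  induction m with
  | zero => simp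
  | succ m ih =>
    calc X = A ^ m * X + (∑ k ∈ Finset.range m, A ^ k) * B := ih
      _ = A ^ m * (A * X + B) + (∑ k ∈ Finset.range m, A ^ k) * B := by rw [← hX]
      _ = A ^ (m + 1) * X + (∑ k ∈ Finset.range (m + 1), A ^ k) * B := by
        rw [Finset.sum_range_succ, Matrix.mul_add, Matrix.add_mul, pow_succ, Matrix.mul_assoc,
          add_assoc, add_comm (A ^ m * B)]

/-- For a strictly upper triangular matrix `A`, the matrix Bellman equation
`X = A * X + B` has the unique solution `X = (I + A + ⋯ + A^(n-1)) * B`. -/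
theorem bellman_unique_solution_strictly_upper_triangular {S : Type*} [Semiring S]
    (n s : ℕ) (A : Matrix (Fin n) (Fin n) S) (hA : ∀ i j : Fin n, j ≤ i → A i j = 0)
    (B X : Matrix (Fin n) (Fin s) S) (hX : X = A * X + B) :
    X = (∑ k ∈ Finset.range n, A ^ k) * B := by
  have h := Matrix.eq_pow_mul_add_of_bellman hX n
  rwa [Matrix.pow_eq_zero_of_strictly_upper hA, Matrix.zero_mul, zero_add] at h
end

section
/- Let S be a semiring and consider a block matrix A = [[A₁₁, A₁₂], [A₂₁, A₂₂]] over S, where A₁₁ is k×k, A₁₂ is k×m, A₂₁ is m×k and A₂₂ is m×m. Suppose P is a k×k matrix with P = A₁₁·P + I, and Q is an m×m matrix with Q = D·Q + I, where D := A₂₂ + A₂₁·P·A₁₂. Then the block matrix X = [[P + P·A₁₂·Q·A₂₁·P, P·A₁₂·Q], [Q·A₂₁·P, Q]] satisfies X = A·X + I. -/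
/-- Escalator method for matrix closure: if `P = A₁₁ * P + I` and `Q = D * Q + I`
with `D = A₂₂ + A₂₁ * P * A₁₂`, then the block matrix
`X = [[P + P·A₁₂·Q·A₂₁·P, P·A₁₂·Q], [Q·A₂₁·P, Q]]` satisfies `X = A * X + I`
for `A = [[A₁₁, A₁₂], [A₂₁, A₂₂]]`. -/
theorem block_closure_fixed_point {S : Type*} [Semiring S] (k m : ℕ)
    (A11 : Matrix (Fin k) (Fin k) S) (A12 : Matrix (Fin k) (Fin m) S)
    (A21 : Matrix (Fin m) (Fin k) S) (A22 : Matrix (Fin m) (Fin m) S)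
    (P : Matrix (Fin k) (Fin k) S) (Q : Matrix (Fin m) (Fin m) S)
    (hP : P = A11 * P + 1)
    (hQ : Q = (A22 + A21 * P * A12) * Q + 1) :
    Matrix.fromBlocks (P + P * A12 * Q * A21 * P) (P * A12 * Q) (Q * A21 * P) Q =
      Matrix.fromBlocks A11 A12 A21 A22 *
        Matrix.fromBlocks (P + P * A12 * Q * A21 * P) (P * A12 * Q) (Q * A21 * P) Q + 1 := by
  have hPmul (n : ℕ) (M : Matrix (Fin k) (Fin n) S) : P * M = A11 * (P * M) + M := by
    conv_lhs => rw [hP]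
    rw [Matrix.add_mul, Matrix.one_mul, Matrix.mul_assoc]
  have hQmul (n : ℕ) (M : Matrix (Fin m) (Fin n) S) :
      Q * M = A22 * (Q * M) + A21 * (P * (A12 * (Q * M))) + M := by
    conv_lhs => rw [hQ]
    simp only [Matrix.add_mul, Matrix.one_mul, Matrix.mul_assoc]
  rw [← Matrix.fromBlocks_one, Matrix.fromBlocks_multiply, Matrix.fromBlocks_add,
    Matrix.fromBlocks_inj]
  simp only [Matrix.mul_add, Matrix.mul_assoc, add_zero]
  refine ⟨?_, hPmul m (A12 * Q), ?_, ?_⟩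
  · conv_lhs => rw [hPmul k (A12 * (Q * (A21 * P)))]
    conv_lhs => enter [1]; rw [hP]
    abel
  · conv_lhs => rw [hQmul k (A21 * P)]
    abel
  · conv_lhs => rw [hQ]
    simp only [Matrix.add_mul, Matrix.mul_assoc]
    abel
end

section
/- Let S be a semiring equipped with a partial order such that addition and multiplication are monotone in each argument (a ≤ b implies a + c ≤ b + c, c·a ≤ c·b and a·c ≤ b·c). Let A₁, A, A₂ be strictly upper triangular n×n matrices over S with A₁ ≤ A ≤ A₂ entrywise, and B₁, B, B₂ be n×s matrices with B₁ ≤ B ≤ B₂ entrywise. Then the unique solutions X₁ = (∑_{k<n} A₁^k)·B₁, X = (∑_{k<n} A^k)·B, X₂ = (∑_{k<n} A₂^k)·B₂ of the endpoint and interior Bellman equations satisfy X₁ ≤ X ≤ X₂ entrywise. Thus the interval [X₁, X₂] computed from the endpoint data is an exact interval estimate for the solution of the interval Bellman equation, and it is obtained at the same computational cost as solving the two endpoint equations. -/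
namespace Matrix

variable {S l m p : Type*} [Semiring S] [PartialOrder S] [IsOrderedAddMonoid S]
  [MulLeftMono S] [MulRightMono S] [Fintype m]

theorem mul_apply_le_mul_apply {M M' : Matrix l m S} {N N' : Matrix m p S}
    (hM : ∀ i j, M i j ≤ M' i j) (hN : ∀ i j, N i j ≤ N' i j) (i : l) (j : p) :
    (M * N) i j ≤ (M' * N') i j := by
  simp only [mul_apply]
  exact Finset.sum_le_sum fun k _ => mul_le_mul' (hM i k) (hN k j)

theorem pow_apply_le_pow_apply [DecidableEq m] {M M' : Matrix m m S}
    (hM : ∀ i j, M i j ≤ M' i j) (k : ℕ) : ∀ i j, (M ^ k) i j ≤ (M' ^ k) i j := by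
  induction k with
  | zero => simp
  | succ k ih =>
    simp only [pow_succ]
    exact mul_apply_le_mul_apply ih hM

theorem sum_pow_mul_apply_le [DecidableEq m] {M M' : Matrix m m S} {N N' : Matrix m p S}
    (hM : ∀ i j, M i j ≤ M' i j) (hN : ∀ i j, N i j ≤ N' i j) (n : ℕ) (i : m) (j : p) :
    ((∑ k ∈ Finset.range n, M ^ k) * N) i j ≤ ((∑ k ∈ Finset.range n, M' ^ k) * N') i j := by
  refine mul_apply_le_mul_apply (fun i j => ?_) hN i j
  simp only [sum_apply]
  exact Finset.sum_le_sum fun k _ => pow_apply_le_pow_apply hM k i j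

end Matrix

/-- Exactness of the interval version of the Bellman equation with strictly upper
triangular matrices over an ordered (positive) semiring: if `A₁ ≤ A ≤ A₂` and
`B₁ ≤ B ≤ B₂` entrywise, then the unique solutions `Xᵢ = (∑_{k<n} Aᵢ^k)·Bᵢ` of the
endpoint and interior Bellman equations satisfy `X₁ ≤ X ≤ X₂` entrywise. -/
theorem interval_bellman_exact {S : Type*} [Semiring S] [PartialOrder S]
    (hadd : ∀ a b c : S, a ≤ b → a + c ≤ b + c)
    (hmul_left : ∀ a b c : S, a ≤ b → c * a ≤ c * b)
    (hmul_right : ∀ a b c : S, a ≤ b → a * c ≤ b * c)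
    (n s : ℕ)
    (A₁ A A₂ : Matrix (Fin n) (Fin n) S)
    (B₁ B B₂ : Matrix (Fin n) (Fin s) S)
    (hA₁ : ∀ i j : Fin n, j ≤ i → A₁ i j = 0)
    (hA : ∀ i j : Fin n, j ≤ i → A i j = 0)
    (hA₂ : ∀ i j : Fin n, j ≤ i → A₂ i j = 0)
    (hAle : ∀ i j : Fin n, A₁ i j ≤ A i j ∧ A i j ≤ A₂ i j)
    (hBle : ∀ (i : Fin n) (j : Fin s), B₁ i j ≤ B i j ∧ B i j ≤ B₂ i j) :
    ∀ (i : Fin n) (j : Fin s),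
      ((∑ k ∈ Finset.range n, A₁ ^ k) * B₁) i j ≤ ((∑ k ∈ Finset.range n, A ^ k) * B) i j ∧
      ((∑ k ∈ Finset.range n, A ^ k) * B) i j ≤ ((∑ k ∈ Finset.range n, A₂ ^ k) * B₂) i j := by
  have : IsOrderedAddMonoid S := { add_le_add_left := fun a b h c => hadd a b c h }
  have : MulLeftMono S := ⟨fun c a b h => hmul_left a b c h⟩
  have : MulRightMono S := ⟨fun c a b h => hmul_right a b c h⟩
  exact fun i j =>
    ⟨Matrix.sum_pow_mul_apply_le (fun i j => (hAle i j).1) (fun i j => (hBle i j).1) n i j,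
      Matrix.sum_pow_mul_apply_le (fun i j => (hAle i j).2) (fun i j => (hBle i j).2) n i j⟩
end

section
/- Let h > 0, m > 0, V : ℝ → ℝ, and let S₁, S₂ : ℝ → ℝ → ℝ be twice differentiable in x and differentiable in t, each satisfying the deformed Hamilton–Jacobi equation ∂S/∂t = V(x) + (1/(2m))·(∂S/∂x)² + (h/(2m))·∂²S/∂x² at every point. Then for any constants λ₁, λ₂ ∈ ℝ, the function S(x, t) := h·log(exp((λ₁ + S₁(x,t))/h) + exp((λ₂ + S₂(x,t))/h)) also satisfies the same equation at every point. That is, the equation is linear with respect to the generalized operations ⊕_h (u ⊕_h v = h·log(e^{u/h} + e^{v/h})) and ⊙ = + (the idempotent superposition principle at finite h). -/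
/-- The derivative of `exp ((a + f) / h)`. -/
lemma HasDerivAt.exp_const_add_div {f : ℝ → ℝ} {f' x : ℝ} (hf : HasDerivAt f f' x) (a h : ℝ) :
    HasDerivAt (fun y => Real.exp ((a + f y) / h)) (Real.exp ((a + f x) / h) * (f' / h)) x :=
  ((hf.const_add a).div_const h).exp

/-- The derivative of a generalized linear combination is the average of the derivatives,
weighted by the exponentials. -/
lemma HasDerivAt.mul_log_exp_add_exp {f g : ℝ → ℝ} {f' g' x h : ℝ} (hh : h ≠ 0)
    (hf : HasDerivAt f f' x) (hg : HasDerivAt g g' x) (a b : ℝ) :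
    HasDerivAt (fun y => h * Real.log (Real.exp ((a + f y) / h) + Real.exp ((b + g y) / h)))
      ((Real.exp ((a + f x) / h) * f' + Real.exp ((b + g x) / h) * g') /
        (Real.exp ((a + f x) / h) + Real.exp ((b + g x) / h))) x := by
  have hsum : Real.exp ((a + f x) / h) + Real.exp ((b + g x) / h) ≠ 0 := by positivity
  refine ((((hf.exp_const_add_div a h).fun_add (hg.exp_const_add_div b h)).log
    hsum).const_mul h).congr_deriv ?_
  field_simp

/-- Idempotent superposition principle at finite `h`: if `S₁`, `S₂` solve the
deformed Hamilton–Jacobi equation `S_t = V + (1/(2m))·S_x² + (h/(2m))·S_xx`,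
then so does the generalized linear combination
`λ₁ ⊙ S₁ ⊕_h λ₂ ⊙ S₂ = h·log(exp((λ₁+S₁)/h) + exp((λ₂+S₂)/h))`. -/
theorem deformed_hamilton_jacobi_superposition
    (h m : ℝ) (hh : 0 < h) (hm : 0 < m) (V : ℝ → ℝ)
    (S₁ S₂ : ℝ → ℝ → ℝ)
    (hS₁x : ∀ x t : ℝ, DifferentiableAt ℝ (fun y => S₁ y t) x)
    (hS₁xx : ∀ x t : ℝ, DifferentiableAt ℝ (deriv fun y => S₁ y t) x)
    (hS₁t : ∀ x t : ℝ, DifferentiableAt ℝ (fun s => S₁ x s) t)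
    (hS₂x : ∀ x t : ℝ, DifferentiableAt ℝ (fun y => S₂ y t) x)
    (hS₂xx : ∀ x t : ℝ, DifferentiableAt ℝ (deriv fun y => S₂ y t) x)
    (hS₂t : ∀ x t : ℝ, DifferentiableAt ℝ (fun s => S₂ x s) t)
    (heq₁ : ∀ x t : ℝ,
      deriv (fun s => S₁ x s) t =
        V x + (1 / (2 * m)) * (deriv (fun y => S₁ y t) x) ^ 2 +
          (h / (2 * m)) * deriv (deriv fun y => S₁ y t) x)
    (heq₂ : ∀ x t : ℝ,
      deriv (fun s => S₂ x s) t =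
        V x + (1 / (2 * m)) * (deriv (fun y => S₂ y t) x) ^ 2 +
          (h / (2 * m)) * deriv (deriv fun y => S₂ y t) x)
    (lam₁ lam₂ : ℝ) :
    ∀ x t : ℝ,
      deriv (fun s => h * Real.log
          (Real.exp ((lam₁ + S₁ x s) / h) + Real.exp ((lam₂ + S₂ x s) / h))) t =
        V x + (1 / (2 * m)) * (deriv (fun y => h * Real.log
            (Real.exp ((lam₁ + S₁ y t) / h) + Real.exp ((lam₂ + S₂ y t) / h))) x) ^ 2 +
          (h / (2 * m)) * deriv (deriv fun y => h * Real.log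
            (Real.exp ((lam₁ + S₁ y t) / h) + Real.exp ((lam₂ + S₂ y t) / h))) x := by
  intro x t
  have hx (y : ℝ) := (hS₁x y t).hasDerivAt.mul_log_exp_add_exp hh.ne' (hS₂x y t).hasDerivAt
    lam₁ lam₂
  have ht := (hS₁t x t).hasDerivAt.mul_log_exp_add_exp hh.ne' (hS₂t x t).hasDerivAt lam₁ lam₂
  have hexp₁ := (hS₁x x t).hasDerivAt.exp_const_add_div lam₁ h
  have hexp₂ := (hS₂x x t).hasDerivAt.exp_const_add_div lam₂ h
  have hsum : Real.exp ((lam₁ + S₁ x t) / h) + Real.exp ((lam₂ + S₂ x t) / h) ≠ 0 := by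
    positivity
  have hxx := ((hexp₁.fun_mul (hS₁xx x t).hasDerivAt).fun_add
    (hexp₂.fun_mul (hS₂xx x t).hasDerivAt)).fun_div (hexp₁.fun_add hexp₂) hsum
  rw [ht.deriv, (hx x).deriv, funext fun y => (hx y).deriv, hxx.deriv, heq₁, heq₂]
  generalize Real.exp ((lam₁ + S₁ x t) / h) = E₁ at *
  generalize Real.exp ((lam₂ + S₂ x t) / h) = E₂ at *
  field_simp
  ring
end
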